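/- arXiv:2207.08537 — 7 statements merged into one kernel-verified Lean document; each statement's English description precedes it below -/
import Mathlib

section
/- Let (Ω, P) be a probability space, n a natural number, and for each i = 1,…,n let r_i ∈ {0,1} be a fixed relevance indicator and e_i : Ω → {0,1} a measurable examination indicator. Define click indicators c_i(ω) = e_i(ω)·r_i. For i, j set p_i = P(e_i = 1), p_{ij} = P(e_i = 1 and e_j = 1), and assume p_i > 0 for all i and p_{ij} > 0 for all i, j. Let a_i = 1/p_i, a_{ij} = 1/p_{ij}, and let A_{ij} be the 4×4 real matrix with rows (a_{ij}, 0, 0, 0), (a_i − a_{ij}, a_i, 0, 0), (a_j − a_{ij}, 0, a_j, 0), (1 − a_i − a_j + a_{ij}, 1 − a_i, 1 − a_j, 1). Then for any fixed vectors z_{ij} ∈ ℝ⁴ (i, j = 1,…,n), the expectation E[ Σ_{i,j=1}^n z_{ij}ᵀ · A_{ij} · s(c_i(ω), c_j(ω)) ] equals Σ_{i,j=1}^n z_{ij}ᵀ · s(r_i, r_j). (Unbiasedness of the pairwise loss, conditional form of Theorem 1.) -/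
open Matrix MeasureTheory

/-- For binary values `b₁, b₂ ∈ {0,1} ⊆ ℝ`, the one-hot pair-type encoding vector
`s(b₁, b₂) = (b₁b₂, b₁(1−b₂), (1−b₁)b₂, (1−b₁)(1−b₂))ᵀ ∈ ℝ⁴`. -/
def svec (b₁ b₂ : ℝ) : Fin 4 → ℝ :=
  ![b₁ * b₂, b₁ * (1 - b₂), (1 - b₁) * b₂, (1 - b₁) * (1 - b₂)]

/-- Unbiasedness of the pairwise loss (conditional form of Theorem 1). -/
theorem stmt_0 {Ω : Type*} [MeasurableSpace Ω] (P : Measure Ω) [IsProbabilityMeasure P]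
    (n : ℕ) (r : Fin n → ℝ) (hr : ∀ i, r i = 0 ∨ r i = 1)
    (e : Fin n → Ω → ℝ) (he : ∀ i, Measurable (e i))
    (hebin : ∀ i ω, e i ω = 0 ∨ e i ω = 1)
    (c : Fin n → Ω → ℝ) (hc : ∀ i ω, c i ω = e i ω * r i)
    (p : Fin n → ℝ) (hp : ∀ i, p i = (P {ω | e i ω = 1}).toReal)
    (pp : Fin n → Fin n → ℝ)
    (hpp : ∀ i j, pp i j = (P {ω | e i ω = 1 ∧ e j ω = 1}).toReal)
    (hppos : ∀ i, 0 < p i) (hpppos : ∀ i j, 0 < pp i j)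
    (a : Fin n → ℝ) (ha : ∀ i, a i = 1 / p i)
    (aa : Fin n → Fin n → ℝ) (haa : ∀ i j, aa i j = 1 / pp i j)
    (A : Fin n → Fin n → Matrix (Fin 4) (Fin 4) ℝ)
    (hA : ∀ i j, A i j =
      !![aa i j, 0, 0, 0;
         a i - aa i j, a i, 0, 0;
         a j - aa i j, 0, a j, 0;
         1 - a i - a j + aa i j, 1 - a i, 1 - a j, 1])
    (z : Fin n → Fin n → Fin 4 → ℝ) :
    (∫ ω, ∑ i, ∑ j, z i j ⬝ᵥ (A i j).mulVec (svec (c i ω) (c j ω)) ∂P)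
      = ∑ i, ∑ j, z i j ⬝ᵥ svec (r i) (r j) := by
  have hset : ∀ i, MeasurableSet {ω | e i ω = 1} := fun i => he i (measurableSet_singleton 1)
  have hset2 : ∀ i j, MeasurableSet {ω | e i ω = 1 ∧ e j ω = 1} :=
    fun i j => (hset i).inter (hset j)
  have e1 : ∀ i, e i = Set.indicator {ω | e i ω = 1} (fun _ => (1 : ℝ)) := by
    intro i
    funext ω
    rcases hebin i ω with h | h <;> simp [Set.indicator, h]
  have e2 : ∀ i j, (fun ω => e i ω * e j ω)
      = Set.indicator {ω | e i ω = 1 ∧ e j ω = 1} (fun _ => (1 : ℝ)) := by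
    intro i j
    funext ω
    rcases hebin i ω with h | h <;> rcases hebin j ω with h' | h' <;> simp [Set.indicator, h, h']
  have i1 : ∀ i, Integrable (e i) P := by
    intro i
    rw [e1 i]
    exact (integrable_const (1 : ℝ)).indicator (hset i)
  have i2 : ∀ i j, Integrable (fun ω => e i ω * e j ω) P := by
    intro i j
    rw [e2 i j]
    exact (integrable_const (1 : ℝ)).indicator (hset2 i j)
  have m1 : ∀ i, ∫ ω, e i ω ∂P = p i := by
    intro i
    have h : ∫ ω, e i ω ∂P = ∫ ω, Set.indicator {ω | e i ω = 1} (fun _ => (1 : ℝ)) ω ∂P :=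
      congrArg (fun f => ∫ ω, f ω ∂P) (e1 i)
    rw [h, integral_indicator (hset i), hp i]
    simp [Measure.real]
  have m2 : ∀ i j, ∫ ω, e i ω * e j ω ∂P = pp i j := by
    intro i j
    rw [e2 i j, integral_indicator (hset2 i j), hpp i j]
    simp [Measure.real]
  have key : ∀ i j ω, z i j ⬝ᵥ (A i j).mulVec (svec (c i ω) (c j ω))
      = z i j 3 + ((z i j 1 - z i j 3) * a i * r i) * e i ω
        + ((z i j 2 - z i j 3) * a j * r j) * e j ω
        + ((z i j 0 - z i j 1 - z i j 2 + z i j 3) * aa i j * r i * r j) * (e i ω * e j ω) := by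
    intro i j ω
    rw [hA, hc, hc]
    simp [svec, dotProduct, Matrix.mulVec, Fin.sum_univ_four]
    ring
  have J1 : ∀ i j, Integrable (fun ω => z i j 3 + ((z i j 1 - z i j 3) * a i * r i) * e i ω) P :=
    fun i j => (integrable_const _).add ((i1 i).const_mul _)
  have J2 : ∀ i j, Integrable (fun ω => z i j 3 + ((z i j 1 - z i j 3) * a i * r i) * e i ω
        + ((z i j 2 - z i j 3) * a j * r j) * e j ω) P :=
    fun i j => (J1 i j).add ((i1 j).const_mul _)
  have J3 : ∀ i j, Integrable (fun ω => z i j ⬝ᵥ (A i j).mulVec (svec (c i ω) (c j ω))) P := by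
    intro i j
    simp only [key]
    exact (J2 i j).add ((i2 i j).const_mul _)
  rw [integral_finsetSum _ (fun i _ => integrable_finsetSum _ (fun j _ => J3 i j))]
  refine Finset.sum_congr rfl fun i _ => ?_
  rw [integral_finsetSum _ (fun j _ => J3 i j)]
  refine Finset.sum_congr rfl fun j _ => ?_
  simp only [key]
  rw [integral_add (J2 i j) ((i2 i j).const_mul _), integral_add (J1 i j) ((i1 j).const_mul _),
    integral_add (integrable_const _) ((i1 i).const_mul _), integral_const_mul,
    integral_const_mul, integral_const_mul, m1, m1, m2]
  have q1 : a i * p i = 1 := by rw [ha]; exact one_div_mul_cancel (hppos i).ne'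
  have q2 : a j * p j = 1 := by rw [ha]; exact one_div_mul_cancel (hppos j).ne'
  have q3 : aa i j * pp i j = 1 := by rw [haa]; exact one_div_mul_cancel (hpppos i j).ne'
  simp [svec, dotProduct, Fin.sum_univ_four]
  linear_combination (z i j 1 - z i j 3) * r i * q1 + (z i j 2 - z i j 3) * r j * q2
    + (z i j 0 - z i j 1 - z i j 2 + z i j 3) * r i * r j * q3
end

section
/- Let (Ω, P) be a probability space, r₁, r₂ ∈ {0,1} fixed relevance indicators, and e₁, e₂ : Ω → {0,1} measurable examination indicators with c₁(ω) = e₁(ω)·r₁ and c₂(ω) = e₂(ω)·r₂. Then the entrywise expectation E[s(c₁(ω), c₂(ω))] equals M · s(r₁, r₂), where M is the 4×4 matrix with rows (p₁₂, 0, 0, 0), (p₁ − p₁₂, p₁, 0, 0), (p₂ − p₁₂, 0, p₂, 0), (1 − p₁ − p₂ + p₁₂, 1 − p₁, 1 − p₂, 1), with p₁ = P(e₁ = 1), p₂ = P(e₂ = 1), p₁₂ = P(e₁ = 1 and e₂ = 1). Consequently, the (t₁, t₂) entry of M is the probability that a pair of items whose true relevance pair is of type t₂ appears in the click feedback as a pair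 of type t₁. -/
open Matrix MeasureTheory

/-- A measurable binary variable is integrable and its expectation is the probability of `1`. -/
lemma binary_expectation {Ω : Type*} [MeasurableSpace Ω] (P : Measure Ω) [IsProbabilityMeasure P]
    (e : Ω → ℝ) (he : Measurable e) (hb : ∀ ω, e ω = 0 ∨ e ω = 1) :
    Integrable e P ∧ ∫ ω, e ω ∂P = (P {ω | e ω = 1}).toReal := by
  have hs : MeasurableSet {ω | e ω = 1} := he (measurableSet_singleton 1)
  have h : e = Set.indicator {ω | e ω = 1} (fun _ => (1 : ℝ)) := by
    funext ω
    rcases hb ω with h | h <;> simp [Set.indicator, h]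
  constructor
  · rw [h]
    exact (integrable_const 1).indicator hs
  · calc ∫ ω, e ω ∂P = ∫ ω, Set.indicator {ω | e ω = 1} (fun _ => (1 : ℝ)) ω ∂P := by rw [← h]
      _ = _ := by rw [integral_indicator hs]; simp [Measure.real]

theorem stmt_4 {Ω : Type*} [MeasurableSpace Ω] (P : Measure Ω) [IsProbabilityMeasure P]
    (r₁ r₂ : ℝ) (hr₁ : r₁ = 0 ∨ r₁ = 1) (hr₂ : r₂ = 0 ∨ r₂ = 1)
    (e₁ e₂ : Ω → ℝ) (he₁ : Measurable e₁) (he₂ : Measurable e₂)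
    (he₁bin : ∀ ω, e₁ ω = 0 ∨ e₁ ω = 1) (he₂bin : ∀ ω, e₂ ω = 0 ∨ e₂ ω = 1)
    (c₁ c₂ : Ω → ℝ) (hc₁ : ∀ ω, c₁ ω = e₁ ω * r₁) (hc₂ : ∀ ω, c₂ ω = e₂ ω * r₂)
    (p₁ p₂ p₁₂ : ℝ)
    (hp₁ : p₁ = (P {ω | e₁ ω = 1}).toReal)
    (hp₂ : p₂ = (P {ω | e₂ ω = 1}).toReal)
    (hp₁₂ : p₁₂ = (P {ω | e₁ ω = 1 ∧ e₂ ω = 1}).toReal)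
    (M : Matrix (Fin 4) (Fin 4) ℝ)
    (hM : M = !![p₁₂, 0, 0, 0;
                 p₁ - p₁₂, p₁, 0, 0;
                 p₂ - p₁₂, 0, p₂, 0;
                 1 - p₁ - p₂ + p₁₂, 1 - p₁, 1 - p₂, 1]) :
    ∀ t : Fin 4, (∫ ω, svec (c₁ ω) (c₂ ω) t ∂P) = M.mulVec (svec r₁ r₂) t := by
  obtain ⟨i₁, E₁⟩ := binary_expectation P e₁ he₁ he₁bin
  obtain ⟨i₂, E₂⟩ := binary_expectation P e₂ he₂ he₂bin
  obtain ⟨i₃, E₃⟩ := binary_expectation P (fun ω => e₁ ω * e₂ ω) (he₁.mul he₂) (by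
    intro ω
    rcases he₁bin ω with h | h <;> rcases he₂bin ω with h' | h' <;> simp [h, h'])
  have hset : {ω | e₁ ω * e₂ ω = 1} = {ω | e₁ ω = 1 ∧ e₂ ω = 1} := by
    ext ω
    rcases he₁bin ω with h | h <;> rcases he₂bin ω with h' | h' <;> simp [h, h']
  rw [hset, ← hp₁₂] at E₃
  rw [← hp₁] at E₁
  rw [← hp₂] at E₂
  have key : ∀ a b c d : ℝ,
      ∫ ω, (a + b * e₁ ω + c * e₂ ω + d * (e₁ ω * e₂ ω)) ∂P = a + b * p₁ + c * p₂ + d * p₁₂ := by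
    intro a b c d
    have j₀ : Integrable (fun _ : Ω => a) P := integrable_const a
    have j₁ := i₁.const_mul b
    have j₂ := i₂.const_mul c
    have j₃ := i₃.const_mul d
    have j₀₁ : Integrable (fun ω => a + b * e₁ ω) P := j₀.add j₁
    have j₀₁₂ : Integrable (fun ω => a + b * e₁ ω + c * e₂ ω) P := j₀₁.add j₂
    rw [integral_add j₀₁₂ j₃, integral_add j₀₁ j₂, integral_add j₀ j₁,
      integral_const_mul, integral_const_mul, integral_const_mul, E₁, E₂, E₃]
    simp
  intro t
  subst hM
  have red : ∀ a b c d : ℝ,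
      (∀ ω, svec (c₁ ω) (c₂ ω) t = a + b * e₁ ω + c * e₂ ω + d * (e₁ ω * e₂ ω)) →
      ∫ ω, svec (c₁ ω) (c₂ ω) t ∂P = a + b * p₁ + c * p₂ + d * p₁₂ := by
    intro a b c d h
    rw [← key]
    exact integral_congr_ae (Filter.Eventually.of_forall h)
  fin_cases t
  · rw [red 0 0 0 (r₁ * r₂) (fun ω => by simp [svec, hc₁, hc₂]; ring)]
    simp [svec, mulVec, dotProduct, Fin.sum_univ_four]; ring
  · rw [red 0 r₁ 0 (-(r₁ * r₂)) (fun ω => by simp [svec, hc₁, hc₂]; ring)]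
    simp [svec, mulVec, dotProduct, Fin.sum_univ_four]; ring
  · rw [red 0 0 r₂ (-(r₁ * r₂)) (fun ω => by simp [svec, hc₁, hc₂]; ring)]
    simp [svec, mulVec, dotProduct, Fin.sum_univ_four]; ring
  · rw [red 1 (-r₁) (-r₂) (r₁ * r₂) (fun ω => by simp [svec, hc₁, hc₂]; ring)]
    simp [svec, mulVec, dotProduct, Fin.sum_univ_four]; ring
end

section
/- Let (Ω, P) be a probability space, r₁, r₂ ∈ {0,1} fixed relevance indicators, and e₁, e₂ : Ω → {0,1} measurable examination indicators with c₁(ω) = e₁(ω)·r₁ and c₂(ω) = e₂(ω)·r₂. Set p₁ = P(e₁ = 1), p₂ = P(e₂ = 1), p₁₂ = P(e₁ = 1 and e₂ = 1) and assume p₁ > 0, p₂ > 0, p₁₂ > 0. Let a₁ = 1/p₁, a₂ = 1/p₂, a₁₂ = 1/p₁₂ and let A be the 4×4 matrix with rows (a₁₂, 0, 0, 0), (a₁ − a₁₂, a₁, 0, 0), (a₂ − a₁₂, 0, a₂, 0), (1 − a₁ − a₂ + a₁₂, 1 − a₁, 1 − a₂, 1). Then the entrywise expectation E[A · s(c₁(ω),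 c₂(ω))] equals s(r₁, r₂). -/
open Matrix MeasureTheory

theorem stmt_5 {Ω : Type*} [MeasurableSpace Ω] (P : Measure Ω) [IsProbabilityMeasure P]
    (r₁ r₂ : ℝ) (hr₁ : r₁ = 0 ∨ r₁ = 1) (hr₂ : r₂ = 0 ∨ r₂ = 1)
    (e₁ e₂ : Ω → ℝ) (he₁ : Measurable e₁) (he₂ : Measurable e₂)
    (he₁bin : ∀ ω, e₁ ω = 0 ∨ e₁ ω = 1) (he₂bin : ∀ ω, e₂ ω = 0 ∨ e₂ ω = 1)
    (c₁ c₂ : Ω → ℝ) (hc₁ : ∀ ω, c₁ ω = e₁ ω * r₁) (hc₂ : ∀ ω, c₂ ω = e₂ ω * r₂)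
    (p₁ p₂ p₁₂ : ℝ)
    (hp₁ : p₁ = (P {ω | e₁ ω = 1}).toReal)
    (hp₂ : p₂ = (P {ω | e₂ ω = 1}).toReal)
    (hp₁₂ : p₁₂ = (P {ω | e₁ ω = 1 ∧ e₂ ω = 1}).toReal)
    (hp₁pos : 0 < p₁) (hp₂pos : 0 < p₂) (hp₁₂pos : 0 < p₁₂)
    (a₁ a₂ a₁₂ : ℝ) (ha₁ : a₁ = 1 / p₁) (ha₂ : a₂ = 1 / p₂) (ha₁₂ : a₁₂ = 1 / p₁₂)
    (A : Matrix (Fin 4) (Fin 4) ℝ)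
    (hA : A = !![a₁₂, 0, 0, 0;
                 a₁ - a₁₂, a₁, 0, 0;
                 a₂ - a₁₂, 0, a₂, 0;
                 1 - a₁ - a₂ + a₁₂, 1 - a₁, 1 - a₂, 1]) :
    ∀ t : Fin 4, (∫ ω, A.mulVec (svec (c₁ ω) (c₂ ω)) t ∂P) = svec r₁ r₂ t := by
  have bin_int : ∀ e : Ω → ℝ, Measurable e → (∀ ω, e ω = 0 ∨ e ω = 1) →
      Integrable e P ∧ ∫ ω, e ω ∂P = (P {ω | e ω = 1}).toReal := by
    intro e he hb
    have hm : MeasurableSet {ω | e ω = 1} := he (measurableSet_singleton 1)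
    have hE : e = Set.indicator {ω | e ω = 1} (fun _ => (1 : ℝ)) := by
      funext ω
      rcases hb ω with h | h <;> simp [Set.indicator, h]
    constructor
    · rw [hE]
      exact (integrable_const (1 : ℝ)).indicator hm
    · conv_lhs => rw [hE]
      rw [integral_indicator_const _ hm]
      simp [Measure.real]
  obtain ⟨i1, I1⟩ := bin_int e₁ he₁ he₁bin
  obtain ⟨i2, I2⟩ := bin_int e₂ he₂ he₂bin
  obtain ⟨i12, I12⟩ := bin_int (fun ω => e₁ ω * e₂ ω) (he₁.mul he₂) (by
    intro ω
    rcases he₁bin ω with h | h <;> rcases he₂bin ω with h' | h' <;> simp [h, h'])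
  have hset : {ω | e₁ ω * e₂ ω = 1} = {ω | e₁ ω = 1 ∧ e₂ ω = 1} := by
    ext ω
    rcases he₁bin ω with h | h <;> rcases he₂bin ω with h' | h' <;> simp [h, h']
  rw [hset, ← hp₁₂] at I12
  rw [← hp₁] at I1
  rw [← hp₂] at I2
  have key : ∀ (f : Ω → ℝ) (k u v w : ℝ),
      (∀ ω, f ω = k + u * e₁ ω + v * e₂ ω + w * (e₁ ω * e₂ ω)) →
      ∫ ω, f ω ∂P = k + u * p₁ + v * p₂ + w * p₁₂ := by
    intro f k u v w hf
    have j0 : Integrable (fun _ : Ω => k) P := integrable_const k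
    have j1 := i1.const_mul u
    have j2 := i2.const_mul v
    have j3 := i12.const_mul w
    have j01 : Integrable (fun ω => k + u * e₁ ω) P := j0.add j1
    have j012 : Integrable (fun ω => k + u * e₁ ω + v * e₂ ω) P := j01.add j2
    simp_rw [hf]
    rw [integral_add j012 j3, integral_add j01 j2, integral_add j0 j1,
      integral_const_mul, integral_const_mul, integral_const_mul, I1, I2, I12]
    simp
  have q1 : a₁ * p₁ = 1 := by rw [ha₁]; field_simp
  have q2 : a₂ * p₂ = 1 := by rw [ha₂]; field_simp
  have q12 : a₁₂ * p₁₂ = 1 := by rw [ha₁₂]; field_simp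
  intro t
  fin_cases t
  · rw [key _ 0 0 0 (a₁₂ * r₁ * r₂) (by
      intro ω
      simp [hA, hc₁, hc₂, svec, Matrix.mulVec, dotProduct, Fin.sum_univ_four]
      ring)]
    simp [svec]
    linear_combination r₁ * r₂ * q12
  · rw [key _ 0 (a₁ * r₁) 0 (-(a₁₂ * r₁ * r₂)) (by
      intro ω
      simp [hA, hc₁, hc₂, svec, Matrix.mulVec, dotProduct, Fin.sum_univ_four]
      ring)]
    simp [svec]
    linear_combination r₁ * q1 - r₁ * r₂ * q12
  · rw [key _ 0 0 (a₂ * r₂) (-(a₁₂ * r₁ * r₂)) (by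
      intro ω
      simp [hA, hc₁, hc₂, svec, Matrix.mulVec, dotProduct, Fin.sum_univ_four]
      ring)]
    simp [svec]
    linear_combination r₂ * q2 - r₁ * r₂ * q12
  · rw [key _ 1 (-(a₁ * r₁)) (-(a₂ * r₂)) (a₁₂ * r₁ * r₂) (by
      intro ω
      simp [hA, hc₁, hc₂, svec, Matrix.mulVec, dotProduct, Fin.sum_univ_four]
      ring)]
    simp [svec]
    linear_combination r₁ * r₂ * q12 - r₁ * q1 - r₂ * q2
end

section
/- Consider the row-skipping browsing model: a probability space (Ω, P); rows m = 1, …, R with positive sizes N(m) and S(m) = N(1) + ⋯ + N(m−1) the number of items before row m (S(1) = 0); measurable events G_m (row m is skipped) with P(G_m) = γ for each m, and D_v (the user continues past rank v) with P(D_v) = C_v for each rank v; and the family of all events {G_m} ∪ {D_v} mutually independent. For a rank u lying in row m₀ (i.e. S(m₀) < u ≤ S(m₀) + N(m₀)), define the examination event E_u = (⋂_{m=1}^{m₀−1} (G_m ∪ ⋂_{v=S(m)+1}^{S(m)+N(m)} D_v)) ∩ G_{m₀}ᶜ ∩ ⋂_{v=S(m₀)+1}^{u−1} D_v. Then P(E_u)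 = (∏_{m=1}^{m₀−1} ((1−γ)·∏_{v=S(m)+1}^{S(m)+N(m)} C_v + γ)) · (1−γ) · ∏_{v=S(m₀)+1}^{u−1} C_v. -/
open MeasureTheory

/-- The sigma-algebra generated by the events indexed by `T`. -/
def sigF {Ω ι : Type*} (s : ι → Set Ω) (T : Set ι) : MeasurableSpace Ω :=
  MeasurableSpace.generateFrom {t | ∃ n ∈ T, s n = t}

lemma sigF_mem {Ω ι : Type*} (s : ι → Set Ω) (T : Set ι) {i : ι} (hi : i ∈ T) :
    MeasurableSet[sigF s T] (s i) :=
  MeasurableSpace.measurableSet_generateFrom ⟨i, hi, rfl⟩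

lemma sigF_mono {Ω ι : Type*} (s : ι → Set Ω) {T T' : Set ι} (h : T ⊆ T') :
    sigF s T ≤ sigF s T' :=
  MeasurableSpace.generateFrom_mono (fun _ ⟨n, hn, e⟩ => ⟨n, h hn, e⟩)

lemma sigF_inter {Ω ι : Type*} [MeasurableSpace Ω] {P : Measure Ω} [IsProbabilityMeasure P]
    {s : ι → Set Ω} (hm : ∀ i, MeasurableSet (s i)) (hs : ProbabilityTheory.iIndepSet s P)
    {T T' : Set ι} (hd : Disjoint T T') {A B : Set Ω}
    (hA : MeasurableSet[sigF s T] A) (hB : MeasurableSet[sigF s T'] B) :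
    (P (A ∩ B)).toReal = (P A).toReal * (P B).toReal := by
  have h := hs.indep_generateFrom_of_disjoint hm T T' hd
  rw [ProbabilityTheory.Indep_iff] at h
  rw [h A B hA hB, ENNReal.toReal_mul]

lemma sigF_D {Ω : Type*} (G D : ℕ → Set Ω) (I : Finset ℕ) {T : Set (ℕ ⊕ ℕ)}
    (h : ∀ v ∈ I, Sum.inr v ∈ T) :
    MeasurableSet[sigF (Sum.elim G D) T] (⋂ v ∈ I, D v) :=
  Finset.measurableSet_biInter (m := sigF (Sum.elim G D) T) I
    (fun v hv => sigF_mem (Sum.elim G D) T (h v hv))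

lemma sigF_G {Ω : Type*} (G D : ℕ → Set Ω) {T : Set (ℕ ⊕ ℕ)} {m : ℕ}
    (h : Sum.inl m ∈ T) : MeasurableSet[sigF (Sum.elim G D) T] (G m) :=
  sigF_mem (Sum.elim G D) T h

lemma prob_D {Ω : Type*} [MeasurableSpace Ω] {P : Measure Ω}
    {G D : ℕ → Set Ω} {C : ℕ → ℝ} (hD : ∀ v, (P (D v)).toReal = C v)
    (hindep : ProbabilityTheory.iIndepSet (Sum.elim G D : ℕ ⊕ ℕ → Set Ω) P) (I : Finset ℕ) :
    (P (⋂ v ∈ I, D v)).toReal = ∏ v ∈ I, C v := by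
  have h := (hindep.precomp (g := Sum.inr) Sum.inr_injective).meas_biInter I
  simp only [Function.comp_apply, Sum.elim_inr] at h
  rw [h, ENNReal.toReal_prod]
  simp [hD]

/-- In the row-skipping browsing model, the probability of examining a given rank `u`
lying in row `m₀` factors as in equation (14) of the paper. -/
theorem stmt_12 {Ω : Type*} [MeasurableSpace Ω] (P : Measure Ω) [IsProbabilityMeasure P]
    (R : ℕ) (N : ℕ → ℕ) (hN : ∀ m, 1 ≤ m → m ≤ R → 0 < N m)
    (S : ℕ → ℕ) (hS1 : S 1 = 0) (hS : ∀ m, S (m + 1) = S m + N m)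
    (γ : ℝ) (C : ℕ → ℝ)
    (G : ℕ → Set Ω) (D : ℕ → Set Ω)
    (hGmeas : ∀ m, MeasurableSet (G m)) (hDmeas : ∀ v, MeasurableSet (D v))
    (hG : ∀ m, (P (G m)).toReal = γ) (hD : ∀ v, (P (D v)).toReal = C v)
    (hindep : ProbabilityTheory.iIndepSet (Sum.elim G D : ℕ ⊕ ℕ → Set Ω) P)
    (u m₀ : ℕ) (hm₀ : 1 ≤ m₀) (hm₀R : m₀ ≤ R)
    (hu1 : S m₀ < u) (hu2 : u ≤ S m₀ + N m₀)
    (E : Set Ω)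
    (hE : E = (⋂ m ∈ Finset.Icc 1 (m₀ - 1),
          (G m ∪ ⋂ v ∈ Finset.Icc (S m + 1) (S m + N m), D v))
        ∩ (G m₀)ᶜ
        ∩ ⋂ v ∈ Finset.Icc (S m₀ + 1) (u - 1), D v) :
    (P E).toReal
      = (∏ m ∈ Finset.Icc 1 (m₀ - 1),
          ((1 - γ) * (∏ v ∈ Finset.Icc (S m + 1) (S m + N m), C v) + γ))
        * (1 - γ) * ∏ v ∈ Finset.Icc (S m₀ + 1) (u - 1), C v := by
  have hm : ∀ i, MeasurableSet ((Sum.elim G D : ℕ ⊕ ℕ → Set Ω) i) := by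
    rintro (i | i)
    · exact hGmeas i
    · exact hDmeas i
  have hSmono : Monotone S := monotone_nat_of_le_succ (fun n => by rw [hS]; omega)
  have hrow : ∀ m, (P (G m ∪ ⋂ v ∈ Finset.Icc (S m + 1) (S m + N m), D v)).toReal
      = (1 - γ) * (∏ v ∈ Finset.Icc (S m + 1) (S m + N m), C v) + γ := by
    intro m
    have hI := prob_D hD hindep (Finset.Icc (S m + 1) (S m + N m))
    have hImeas : MeasurableSet (⋂ v ∈ Finset.Icc (S m + 1) (S m + N m), D v) :=
      Finset.measurableSet_biInter _ (fun v _ => hDmeas v)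
    have h1 := sigF_inter hm hindep
      (T := Set.range Sum.inl) (T' := Set.range Sum.inr)
      (by rw [Set.disjoint_left]; rintro _ ⟨a, rfl⟩ ⟨b, hb⟩; simp at hb)
      (sigF_G G D ⟨m, rfl⟩)
      (sigF_D G D (Finset.Icc (S m + 1) (S m + N m)) (fun v _ => ⟨v, rfl⟩))
    have h2 := measureReal_union_add_inter (μ := P) (s := G m) hImeas
    simp only [Measure.real] at h2
    rw [h1, hI, hG] at h2
    linarith
  set T : ℕ → Set (ℕ ⊕ ℕ) :=
    fun k => {x | Sum.elim (fun m => m ≤ k) (fun v => v ≤ S (k + 1)) x} with hT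
  have hTmono : ∀ k, T k ⊆ T (k + 1) := by
    rintro k (m | v) h
    · simp only [hT, Set.mem_setOf_eq, Sum.elim_inl] at h ⊢
      omega
    · simp only [hT, Set.mem_setOf_eq, Sum.elim_inr] at h ⊢
      exact h.trans (hSmono (by omega))
  have key : ∀ k, MeasurableSet[sigF (Sum.elim G D) (T k)] (⋂ m ∈ Finset.Icc 1 k,
          (G m ∪ ⋂ v ∈ Finset.Icc (S m + 1) (S m + N m), D v)) ∧
      (P (⋂ m ∈ Finset.Icc 1 k,
          (G m ∪ ⋂ v ∈ Finset.Icc (S m + 1) (S m + N m), D v))).toReal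
      = ∏ m ∈ Finset.Icc 1 k,
          ((1 - γ) * (∏ v ∈ Finset.Icc (S m + 1) (S m + N m), C v) + γ) := by
    intro k
    induction k with
    | zero => simp
    | succ k ih =>
      obtain ⟨ih1, ih2⟩ := ih
      have hr : ∀ T' : Set (ℕ ⊕ ℕ), Sum.inl (k + 1) ∈ T' →
          (∀ v, S (k + 1) < v → v ≤ S (k + 2) → Sum.inr v ∈ T') →
          MeasurableSet[sigF (Sum.elim G D) T'] (G (k + 1) ∪
            ⋂ v ∈ Finset.Icc (S (k + 1) + 1) (S (k + 1) + N (k + 1)), D v) := by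
        intro T' h1 h2
        refine MeasurableSet.union (sigF_G G D h1) (sigF_D G D _ fun v hv => ?_)
        rw [Finset.mem_Icc, ← hS] at hv
        exact h2 v (by omega) hv.2
      have hsplit : (⋂ m ∈ Finset.Icc 1 (k + 1),
          (G m ∪ ⋂ v ∈ Finset.Icc (S m + 1) (S m + N m), D v)) =
          (⋂ m ∈ Finset.Icc 1 k,
          (G m ∪ ⋂ v ∈ Finset.Icc (S m + 1) (S m + N m), D v)) ∩ (G (k + 1) ∪
            ⋂ v ∈ Finset.Icc (S (k + 1) + 1) (S (k + 1) + N (k + 1)), D v) := by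
        rw [← Finset.insert_Icc_right_eq_Icc_add_one (by omega : 1 ≤ k + 1),
          Finset.set_biInter_insert, Set.inter_comm]
      rw [hsplit]
      refine ⟨MeasurableSet.inter (sigF_mono _ (hTmono k) _ ih1)
        (hr _ (by simp [hT]) (fun v _ h => by simpa [hT] using h)), ?_⟩
      rw [sigF_inter hm hindep (T := T k) (T' := (T k)ᶜ) disjoint_compl_right ih1
        (hr _ (by simp [hT]) (fun v h _ => by simpa [hT] using h)), ih2, hrow,
        Finset.prod_Icc_succ_top (by omega)]
  obtain ⟨k, rfl⟩ : ∃ k, m₀ = k + 1 := ⟨m₀ - 1, by omega⟩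
  simp only [Nat.add_sub_cancel] at hE ⊢
  obtain ⟨k1, k2⟩ := key k
  have hGc : (P (G (k + 1))ᶜ).toReal = 1 - γ := by
    rw [← hG (k + 1)]
    exact probReal_compl_eq_one_sub (hGmeas _)
  have e1 := sigF_inter hm hindep (T := T k) (T' := (T k)ᶜ) disjoint_compl_right k1
    (MeasurableSet.compl (sigF_G G D (m := k + 1) (T := (T k)ᶜ) (by simp [hT])))
  have e2 := sigF_inter hm hindep (T := T k ∪ {Sum.inl (k + 1)})
    (T' := (T k ∪ {Sum.inl (k + 1)})ᶜ) disjoint_compl_right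
    (MeasurableSet.inter (sigF_mono _ Set.subset_union_left _ k1)
      (MeasurableSet.compl (sigF_G G D (m := k + 1) (by simp))))
    (sigF_D G D (Finset.Icc (S (k + 1) + 1) (u - 1)) (fun v hv => by
      rw [Finset.mem_Icc] at hv
      simp [hT]
      omega))
  rw [hE, e2, e1, k2, hGc, prob_D hD hindep]
end

section
/- In the row-skipping browsing model (probability space (Ω, P); rows m = 1, …, R with positive sizes N(m), S(m) the number of items before row m; mutually independent events G_m with P(G_m) = γ and D_v with P(D_v) = C_v; examination events E_u defined as E_u = (⋂_{m < row(u)} (G_m ∪ ⋂_{v=S(m)+1}^{S(m)+N(m)} D_v)) ∩ G_{row(u)}ᶜ ∩ ⋂_{v=S(row(u))+1}^{u−1} D_v), let u₁ < u₂ be two ranks lying in the same row. Then P(E_{u₁} ∩ E_{u₂}) = P(E_{u₁}) · ∏_{v=u₁}^{u₂−1} C_v. -/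
open MeasureTheory

/-- In the row-skipping browsing model, the joint examination probability of two ranks
`u₁ < u₂` lying in the same row `m₀` equals `P(E u₁) · ∏_{v=u₁}^{u₂-1} C v`. -/
theorem stmt_13 {Ω : Type*} [MeasurableSpace Ω] (P : Measure Ω) [IsProbabilityMeasure P]
    (R : ℕ) (N : ℕ → ℕ) (hN : ∀ m, 1 ≤ m → m ≤ R → 0 < N m)
    (S : ℕ → ℕ) (hS1 : S 1 = 0) (hS : ∀ m, S (m + 1) = S m + N m)
    (γ : ℝ) (C : ℕ → ℝ)
    (G : ℕ → Set Ω) (D : ℕ → Set Ω)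
    (hGmeas : ∀ m, MeasurableSet (G m)) (hDmeas : ∀ v, MeasurableSet (D v))
    (hG : ∀ m, (P (G m)).toReal = γ) (hD : ∀ v, (P (D v)).toReal = C v)
    (hindep : ProbabilityTheory.iIndepSet (Sum.elim G D : ℕ ⊕ ℕ → Set Ω) P)
    (m₀ : ℕ) (hm₀ : 1 ≤ m₀) (hm₀R : m₀ ≤ R)
    (u₁ u₂ : ℕ) (hu₁ : S m₀ < u₁) (hu₁u₂ : u₁ < u₂) (hu₂ : u₂ ≤ S m₀ + N m₀)
    (E : ℕ → Set Ω)
    (hE : ∀ u, E u = (⋂ m ∈ Finset.Icc 1 (m₀ - 1),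
          (G m ∪ ⋂ v ∈ Finset.Icc (S m + 1) (S m + N m), D v))
        ∩ (G m₀)ᶜ
        ∩ ⋂ v ∈ Finset.Icc (S m₀ + 1) (u - 1), D v) :
    (P (E u₁ ∩ E u₂)).toReal
      = (P (E u₁)).toReal * ∏ v ∈ Finset.Icc u₁ (u₂ - 1), C v := by
  classical
  have hSmono : Monotone S := monotone_nat_of_le_succ (fun m => by rw [hS]; omega)
  set F : ℕ ⊕ ℕ → Set Ω := Sum.elim G D with hF
  have hFmeas : ∀ i, MeasurableSet (F i) := by
    rintro (m | v)
    · exact hGmeas m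
    · exact hDmeas v
  let T₁ : Set (ℕ ⊕ ℕ) := {i | ∀ v, i = Sum.inr v → v < u₁}
  let T₂ : Set (ℕ ⊕ ℕ) := {i | ∃ v, i = Sum.inr v ∧ u₁ ≤ v}
  have hdisj : Disjoint T₁ T₂ := by
    rw [Set.disjoint_left]
    rintro i h1 ⟨v, hv, hle⟩
    have := h1 v hv
    omega
  have hI := ProbabilityTheory.indep_iSup_of_disjoint
    (m := fun i => MeasurableSpace.generateFrom {F i}) (μ := P)
    (fun i => MeasurableSpace.generateFrom_le (by
      rintro t rfl; exact hFmeas i)) hindep hdisj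
  have hbase : ∀ (T : Set (ℕ ⊕ ℕ)) (i : ℕ ⊕ ℕ), i ∈ T →
      MeasurableSet[⨆ i ∈ T, MeasurableSpace.generateFrom {F i}] (F i) := by
    intro T i hi
    exact le_iSup₂ (f := fun i (_ : i ∈ T) => MeasurableSpace.generateFrom {F i}) i hi _
      (MeasurableSpace.measurableSet_generateFrom rfl)
  have hGT : ∀ m, MeasurableSet[⨆ i ∈ T₁, MeasurableSpace.generateFrom {F i}] (G m) :=
    fun m => hbase T₁ (Sum.inl m) (by intro v hv; cases hv)
  have hDT : ∀ v, v < u₁ →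
      MeasurableSet[⨆ i ∈ T₁, MeasurableSpace.generateFrom {F i}] (D v) :=
    fun v hv => hbase T₁ (Sum.inr v) (by intro w hw; cases hw; exact hv)
  have hDT2 : ∀ v, u₁ ≤ v →
      MeasurableSet[⨆ i ∈ T₂, MeasurableSpace.generateFrom {F i}] (D v) :=
    fun v hv => hbase T₂ (Sum.inr v) ⟨v, rfl, hv⟩
  have hE1 : MeasurableSet[⨆ i ∈ T₁, MeasurableSpace.generateFrom {F i}] (E u₁) := by
    rw [hE]
    refine MeasurableSet.inter (MeasurableSet.inter ?_ (hGT m₀).compl) ?_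
    · refine Finset.measurableSet_biInter _ fun m hm => (hGT m).union ?_
      refine Finset.measurableSet_biInter _ fun v hv => hDT v ?_
      rw [Finset.mem_Icc] at hm hv
      have := hSmono (show m + 1 ≤ m₀ by omega)
      rw [hS] at this
      omega
    · refine Finset.measurableSet_biInter _ fun v hv => hDT v ?_
      rw [Finset.mem_Icc] at hv
      omega
  have hB : MeasurableSet[⨆ i ∈ T₂, MeasurableSpace.generateFrom {F i}]
      (⋂ v ∈ Finset.Icc u₁ (u₂ - 1), D v) :=
    Finset.measurableSet_biInter _ fun v hv => hDT2 v (Finset.mem_Icc.1 hv).1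
  have hEE : E u₁ ∩ E u₂ = E u₁ ∩ ⋂ v ∈ Finset.Icc u₁ (u₂ - 1), D v := by
    rw [hE u₁, hE u₂]
    ext x
    simp only [Set.mem_inter_iff, Set.mem_iInter₂ (s := fun v (_ : v ∈ Finset.Icc _ _) => D v)]
    constructor
    · rintro ⟨⟨h0, h1⟩, -, h2⟩
      refine ⟨⟨h0, h1⟩, fun v hv => h2 v ?_⟩
      rw [Finset.mem_Icc] at *
      omega
    · rintro ⟨⟨h0, h1⟩, h2⟩
      refine ⟨⟨h0, h1⟩, h0, fun v hv => ?_⟩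
      rw [Finset.mem_Icc] at hv
      by_cases h : v < u₁
      · exact h1 v (Finset.mem_Icc.2 (by omega))
      · exact h2 v (Finset.mem_Icc.2 (by omega))
  have hprod : P (⋂ v ∈ Finset.Icc u₁ (u₂ - 1), D v)
      = ∏ v ∈ Finset.Icc u₁ (u₂ - 1), P (D v) := by
    have h := hindep.meas_biInter ((Finset.Icc u₁ (u₂ - 1)).map Function.Embedding.inr)
    rw [Finset.prod_map] at h
    simpa [hF] using h
  have hmul := (ProbabilityTheory.Indep_iff _ _ P).1 hI _ _ hE1 hB
  rw [hEE, hmul, hprod, ENNReal.toReal_mul, ENNReal.toReal_prod]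
  simp only [hD]
end

section
/- In the row-skipping browsing model (probability space (Ω, P); rows m = 1, …, R with positive sizes N(m), S(m) the number of items before row m; mutually independent events G_m with P(G_m) = γ and D_v with P(D_v) = C_v; examination events E_u defined as E_u = (⋂_{m < row(u)} (G_m ∪ ⋂_{v=S(m)+1}^{S(m)+N(m)} D_v)) ∩ G_{row(u)}ᶜ ∩ ⋂_{v=S(row(u))+1}^{u−1} D_v), let u₁ < u₂ be ranks with row(u₁) < row(u₂). Then P(E_{u₁} ∩ E_{u₂}) = P(E_{u₁}) · (∏_{v=u₁}^{S(row(u₁))+N(row(u₁))} C_v) · (∏_{m=row(u₁)+1}^{row(u₂)−1} ((1−γ)·∏_{v=S(m)+1}^{S(m)+N(m)} C_v + γ)) · (1−γ) · ∏_{v=S(row(u₂))+1}^{u₂−1} C_v. -/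
open MeasureTheory

/-- The sigma-algebra generated by the events indexed by `s`. -/
def sig14 {Ω ι : Type*} (X : ι → Set Ω) (s : Set ι) : MeasurableSpace Ω :=
  ⨆ i ∈ s, MeasurableSpace.generateFrom {X i}

lemma sig14_mono {Ω ι : Type*} (X : ι → Set Ω) {s t : Set ι} (h : s ⊆ t) {A : Set Ω}
    (hA : MeasurableSet[sig14 X s] A) : MeasurableSet[sig14 X t] A := by
  have : sig14 X s ≤ sig14 X t := biSup_mono h
  exact this _ hA

lemma sig14_base {Ω ι : Type*} (X : ι → Set Ω) {s : Set ι} {i : ι} (h : i ∈ s) :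
    MeasurableSet[sig14 X s] (X i) := by
  have : MeasurableSpace.generateFrom {X i} ≤ sig14 X s :=
    le_iSup₂ (f := fun i (_ : i ∈ s) => MeasurableSpace.generateFrom {X i}) i h
  exact this _ (MeasurableSpace.measurableSet_generateFrom rfl)

lemma sig14_biInter {Ω ι κ : Type*} (X : ι → Set Ω) {s : Set ι} (F : Finset κ) (A : κ → Set Ω)
    (h : ∀ k ∈ F, MeasurableSet[sig14 X s] (A k)) :
    MeasurableSet[sig14 X s] (⋂ k ∈ F, A k) :=
  @Finset.measurableSet_biInter Ω κ (sig14 X s) A F h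

lemma sig14_mul {Ω ι : Type*} [MeasurableSpace Ω] {P : Measure Ω} [IsProbabilityMeasure P]
    {X : ι → Set Ω} (hX : ∀ i, MeasurableSet (X i)) (hind : ProbabilityTheory.iIndepSet X P)
    (s t : Set ι) (hst : Disjoint s t) {A B : Set Ω}
    (hA : MeasurableSet[sig14 X s] A) (hB : MeasurableSet[sig14 X t] B) :
    P.real (A ∩ B) = P.real A * P.real B := by
  have h := ProbabilityTheory.indep_iSup_of_disjoint
    (m := fun i => MeasurableSpace.generateFrom {X i}) (μ := P)
    (fun i => MeasurableSpace.generateFrom_le (by rintro t rfl; exact hX i))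
    (show ProbabilityTheory.iIndep _ P from hind) hst
  have := (ProbabilityTheory.Indep_iff _ _ _).1 h A B hA hB
  simp [Measure.real, this]

lemma sig14_prod {Ω ι κ : Type*} [MeasurableSpace Ω] {P : Measure Ω} [IsProbabilityMeasure P]
    {X : ι → Set Ω} (hX : ∀ i, MeasurableSet (X i)) (hind : ProbabilityTheory.iIndepSet X P)
    (F : Finset κ) (s : κ → Set ι) (A : κ → Set Ω)
    (hd : ∀ k ∈ F, ∀ l ∈ F, k ≠ l → Disjoint (s k) (s l))
    (hA : ∀ k ∈ F, MeasurableSet[sig14 X (s k)] (A k)) :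
    P.real (⋂ k ∈ F, A k) = ∏ k ∈ F, P.real (A k) := by
  classical
  induction F using Finset.induction_on with
  | empty => simp
  | insert a F ha ih =>
    rw [Finset.set_biInter_insert, Finset.prod_insert ha,
      sig14_mul hX hind (s a) (⋃ k ∈ F, s k) ?_ (hA a (Finset.mem_insert_self _ _)) ?_, ih]
    · intro k hk l hl
      exact hd k (Finset.mem_insert_of_mem hk) l (Finset.mem_insert_of_mem hl)
    · intro k hk
      exact hA k (Finset.mem_insert_of_mem hk)
    · simp only [Set.disjoint_iUnion_right]
      intro k hk
      exact hd a (Finset.mem_insert_self _ _) k (Finset.mem_insert_of_mem hk)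
        (fun h => ha (h ▸ hk))
    · apply sig14_biInter
      intro k hk
      exact sig14_mono X (Set.subset_biUnion_of_mem (u := s) (show k ∈ (F : Set κ) from hk))
        (hA k (Finset.mem_insert_of_mem hk))

/-- In the row-skipping browsing model, the joint examination probability of two ranks
`u₁ < u₂` lying in different rows `m₁ < m₂` factors as in equation (15) of the paper. -/
theorem stmt_14 {Ω : Type*} [MeasurableSpace Ω] (P : Measure Ω) [IsProbabilityMeasure P]
    (R : ℕ) (N : ℕ → ℕ) (hN : ∀ m, 1 ≤ m → m ≤ R → 0 < N m)
    (S : ℕ → ℕ) (hS1 : S 1 = 0) (hS : ∀ m, S (m + 1) = S m + N m)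
    (γ : ℝ) (C : ℕ → ℝ)
    (G : ℕ → Set Ω) (D : ℕ → Set Ω)
    (hGmeas : ∀ m, MeasurableSet (G m)) (hDmeas : ∀ v, MeasurableSet (D v))
    (hG : ∀ m, (P (G m)).toReal = γ) (hD : ∀ v, (P (D v)).toReal = C v)
    (hindep : ProbabilityTheory.iIndepSet (Sum.elim G D : ℕ ⊕ ℕ → Set Ω) P)
    (m₁ m₂ : ℕ) (hm₁ : 1 ≤ m₁) (hm₁m₂ : m₁ < m₂) (hm₂R : m₂ ≤ R)
    (u₁ u₂ : ℕ) (hu₁l : S m₁ < u₁) (hu₁r : u₁ ≤ S m₁ + N m₁)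
    (hu₂l : S m₂ < u₂) (hu₂r : u₂ ≤ S m₂ + N m₂) (hu₁u₂ : u₁ < u₂)
    (E : ℕ → ℕ → Set Ω)
    (hE : ∀ u m, E u m = (⋂ m' ∈ Finset.Icc 1 (m - 1),
          (G m' ∪ ⋂ v ∈ Finset.Icc (S m' + 1) (S m' + N m'), D v))
        ∩ (G m)ᶜ
        ∩ ⋂ v ∈ Finset.Icc (S m + 1) (u - 1), D v) :
    (P (E u₁ m₁ ∩ E u₂ m₂)).toReal
      = (P (E u₁ m₁)).toReal
        * (∏ v ∈ Finset.Icc u₁ (S m₁ + N m₁), C v)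
        * (∏ m ∈ Finset.Icc (m₁ + 1) (m₂ - 1),
            ((1 - γ) * (∏ v ∈ Finset.Icc (S m + 1) (S m + N m), C v) + γ))
        * (1 - γ) * ∏ v ∈ Finset.Icc (S m₂ + 1) (u₂ - 1), C v := by
  classical
  have hmono : Monotone S := monotone_nat_of_le_succ (fun n => by rw [hS]; omega)
  set X : ℕ ⊕ ℕ → Set Ω := Sum.elim G D with hXdef
  have hX : ∀ i, MeasurableSet (X i) := by
    rintro (i | i)
    · exact hGmeas i
    · exact hDmeas i
  -- supports
  let T : (ℕ → Prop) → (ℕ → Prop) → Set (ℕ ⊕ ℕ) := fun p q => {i | Sum.elim p q i}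
  have hdisj : ∀ p q p' q' : ℕ → Prop, (∀ m, p m → p' m → False) → (∀ v, q v → q' v → False) →
      Disjoint (T p q) (T p' q') := by
    intro p q p' q' h1 h2
    rw [Set.disjoint_left]
    rintro (m | v) h h'
    · exact h1 m h h'
    · exact h2 v h h'
  have hTG : ∀ (p q : ℕ → Prop) m, p m → MeasurableSet[sig14 X (T p q)] (G m) :=
    fun p q m h => sig14_base X (i := Sum.inl m) h
  have hTD : ∀ (p q : ℕ → Prop) a b, (∀ v, a ≤ v → v ≤ b → q v) →
      MeasurableSet[sig14 X (T p q)] (⋂ v ∈ Finset.Icc a b, D v) := by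
    intro p q a b h
    apply sig14_biInter
    intro v hv
    rw [Finset.mem_Icc] at hv
    exact sig14_base X (i := Sum.inr v) (h v hv.1 hv.2)
  have hDprod : ∀ a b, P.real (⋂ v ∈ Finset.Icc a b, D v) = ∏ v ∈ Finset.Icc a b, C v := by
    intro a b
    rw [sig14_prod hX hindep _ (fun v => {Sum.inr v})]
    · exact Finset.prod_congr rfl (fun v _ => hD v)
    · intro k _ l _ hkl
      simpa using hkl
    · intro k _
      exact sig14_base X (i := Sum.inr k) rfl
  have hGc : ∀ m, P.real (G m)ᶜ = 1 - γ := by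
    intro m
    rw [probReal_compl_eq_one_sub (hGmeas m)]
    exact congrArg _ (hG m)
  let A : ℕ → Set Ω := fun m => G m ∪ ⋂ v ∈ Finset.Icc (S m + 1) (S m + N m), D v
  have hTA : ∀ (p q : ℕ → Prop) m, p m → (∀ v, S m < v → v ≤ S (m + 1) → q v) →
      MeasurableSet[sig14 X (T p q)] (A m) := by
    intro p q m h1 h2
    refine @MeasurableSet.union Ω (sig14 X (T p q)) _ _ (hTG p q m h1) (hTD p q _ _ ?_)
    intro v hv hv'
    exact h2 v hv (by rw [hS]; exact hv')
  have hAm : ∀ m, P.real (A m)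
      = (1 - γ) * (∏ v ∈ Finset.Icc (S m + 1) (S m + N m), C v) + γ := by
    intro m
    have hBm : MeasurableSet (⋂ v ∈ Finset.Icc (S m + 1) (S m + N m), D v) :=
      Finset.measurableSet_biInter _ (fun v _ => hDmeas v)
    have h1 := measureReal_union_add_inter (μ := P) (s := G m) hBm
    rw [sig14_mul hX hindep (T (fun _ => True) (fun _ => False)) (T (fun _ => False) (fun _ => True))
      (hdisj _ _ _ _ (fun _ _ h => h) (fun _ h _ => h)) (hTG _ _ m trivial)
      (hTD _ _ _ _ (fun _ _ _ => trivial)), hDprod] at h1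
    have h2 : P.real (G m) = γ := hG m
    rw [h2] at h1
    change P.real (A m) + _ = _ at h1
    linarith
  have hE1 : MeasurableSet[sig14 X (T (fun m => m ≤ m₁) (fun v => v < u₁))] (E u₁ m₁) := by
    rw [hE]
    refine @MeasurableSet.inter Ω (sig14 X _) _ _ (@MeasurableSet.inter Ω (sig14 X _) _ _ ?_ ?_) ?_
    · apply sig14_biInter
      intro m hm
      rw [Finset.mem_Icc] at hm
      refine hTA _ _ m (by omega) ?_
      intro v _ hv
      have := hmono (show m + 1 ≤ m₁ by omega)
      omega
    · exact @MeasurableSet.compl Ω _ (sig14 X _) (hTG _ _ m₁ le_rfl)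
    · exact hTD _ _ _ _ (fun v _ hv => by omega)
  have hset : E u₁ m₁ ∩ E u₂ m₂ = (((E u₁ m₁ ∩ ⋂ v ∈ Finset.Icc u₁ (S m₁ + N m₁), D v)
      ∩ ⋂ m ∈ Finset.Icc (m₁ + 1) (m₂ - 1), A m) ∩ (G m₂)ᶜ)
      ∩ ⋂ v ∈ Finset.Icc (S m₂ + 1) (u₂ - 1), D v := by
    ext ω
    simp only [hE, A, Set.mem_inter_iff, Set.mem_iInter, Set.mem_union, Set.mem_compl_iff,
      Finset.mem_Icc]
    constructor
    · rintro ⟨⟨⟨a1, a2⟩, a3⟩, ⟨b1, b2⟩, b3⟩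
      refine ⟨⟨⟨⟨⟨⟨a1, a2⟩, a3⟩, ?_⟩, ?_⟩, b2⟩, b3⟩
      · intro v hv
        rcases b1 m₁ (by omega) with h | h
        · exact absurd h a2
        · exact h v (by omega)
      · intro m hm
        exact b1 m (by omega)
    · rintro ⟨⟨⟨⟨⟨⟨a1, a2⟩, a3⟩, a4⟩, a5⟩, b2⟩, b3⟩
      refine ⟨⟨⟨a1, a2⟩, a3⟩, ⟨?_, b2⟩, b3⟩
      intro m hm
      rcases lt_trichotomy m m₁ with h | h | h
      · exact a1 m (by omega)
      · subst h
        right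
        intro v hv
        by_cases hvu : v < u₁
        · exact a3 v (by omega)
        · exact a4 v (by omega)
      · exact a5 m (by omega)
  have hS1' := hS m₁
  have hS12 := hmono (show m₁ + 1 ≤ m₂ by omega)
  have i1 : MeasurableSet[sig14 X (T (fun m => m ≤ m₁) (fun v => v ≤ S (m₁ + 1)))]
      (E u₁ m₁ ∩ ⋂ v ∈ Finset.Icc u₁ (S m₁ + N m₁), D v) := by
    refine @MeasurableSet.inter Ω (sig14 X _) _ _ (sig14_mono X ?_ hE1)
      (hTD _ _ _ _ (fun v _ hv => by omega))
    rintro (m | v) h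
    · exact h
    · change v < u₁ at h
      change v ≤ S (m₁ + 1)
      omega
  have iA : MeasurableSet[sig14 X (T (fun m => m₁ < m ∧ m < m₂)
      (fun v => S (m₁ + 1) < v ∧ v ≤ S m₂))] (⋂ m ∈ Finset.Icc (m₁ + 1) (m₂ - 1), A m) := by
    apply sig14_biInter
    intro m hm
    rw [Finset.mem_Icc] at hm
    refine hTA _ _ m (by omega) ?_
    intro v hv hv'
    have := hmono (show m + 1 ≤ m₂ by omega)
    have := hmono hm.1
    omega
  have i2 : MeasurableSet[sig14 X (T (fun m => m < m₂) (fun v => v ≤ S m₂))]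
      ((E u₁ m₁ ∩ ⋂ v ∈ Finset.Icc u₁ (S m₁ + N m₁), D v)
      ∩ ⋂ m ∈ Finset.Icc (m₁ + 1) (m₂ - 1), A m) := by
    refine @MeasurableSet.inter Ω (sig14 X _) _ _ (sig14_mono X ?_ i1) (sig14_mono X ?_ iA)
    · rintro (m | v) h
      · exact lt_of_le_of_lt h hm₁m₂
      · exact le_trans h hS12
    · rintro (m | v) h
      · exact h.2
      · exact h.2
  have iG : ∀ q, MeasurableSet[sig14 X (T (fun m => m = m₂) q)] (G m₂)ᶜ :=
    fun q => @MeasurableSet.compl Ω _ (sig14 X _) (hTG _ _ m₂ rfl)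
  have i3 : MeasurableSet[sig14 X (T (fun m => m ≤ m₂) (fun v => v ≤ S m₂))]
      (((E u₁ m₁ ∩ ⋂ v ∈ Finset.Icc u₁ (S m₁ + N m₁), D v)
      ∩ ⋂ m ∈ Finset.Icc (m₁ + 1) (m₂ - 1), A m) ∩ (G m₂)ᶜ) := by
    refine @MeasurableSet.inter Ω (sig14 X _) _ _ (sig14_mono X ?_ i2)
      (sig14_mono X ?_ (iG (fun _ => False)))
    · rintro (m | v) h
      · exact le_of_lt (show m < m₂ from h)
      · exact h
    · rintro (m | v) h
      · exact le_of_eq (show m = m₂ from h)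
      · exact h.elim
  have hAprod : P.real (⋂ m ∈ Finset.Icc (m₁ + 1) (m₂ - 1), A m)
      = ∏ m ∈ Finset.Icc (m₁ + 1) (m₂ - 1),
            ((1 - γ) * (∏ v ∈ Finset.Icc (S m + 1) (S m + N m), C v) + γ) := by
    rw [sig14_prod hX hindep _ (fun m => T (fun k => k = m) (fun v => S m < v ∧ v ≤ S (m + 1)))]
    · exact Finset.prod_congr rfl (fun m _ => hAm m)
    · intro k _ l _ hkl
      apply hdisj
      · intro m h h'
        omega
      · intro v h h'
        rcases lt_or_gt_of_ne hkl with hlt | hlt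
        · have := hmono (show k + 1 ≤ l from hlt)
          omega
        · have := hmono (show l + 1 ≤ k from hlt)
          omega
    · intro m _
      exact hTA _ _ m rfl (fun v h h' => ⟨h, h'⟩)
  change P.real _ = P.real _ * _ * _ * _ * _
  rw [hset]
  rw [sig14_mul hX hindep _ (T (fun _ => False) (fun v => S m₂ < v))
      (hdisj _ _ _ _ (fun _ _ h => h) (fun _ _ _ => by omega)) i3
      (hTD _ _ _ _ (fun v h _ => by omega)), hDprod,
    sig14_mul hX hindep _ (T (fun m => m = m₂) (fun _ => False))
      (hdisj _ _ _ _ (fun _ _ _ => by omega) (fun _ _ h => h)) i2 (iG _), hGc,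
    sig14_mul hX hindep _ _
      (hdisj _ _ _ _ (fun _ _ _ => by omega) (fun _ _ _ => by omega)) i1 iA, hAprod,
    sig14_mul hX hindep _ (T (fun _ => False) (fun v => u₁ ≤ v))
      (hdisj _ _ _ _ (fun _ _ h => h) (fun _ _ _ => by omega)) hE1
      (hTD _ _ _ _ (fun v h _ => h)), hDprod]
end

section
/- Let (Ω, P) be a probability space, r₁, r₂ ∈ {0,1} fixed relevance indicators, e₁, e₂ : Ω → {0,1} measurable examination indicators with p₁ = P(e₁ = 1) > 0, p₂ = P(e₂ = 1) > 0, p₁₂ = P(e₁ = 1 and e₂ = 1) > 0, and click indicators c₁(ω) = e₁(ω)·r₁, c₂(ω) = e₂(ω)·r₂. Let a₁ = 1/p₁, a₂ = 1/p₂, a₁₂ = 1/p₁₂ and A be the 4×4 matrix with rows (a₁₂, 0, 0, 0), (a₁ − a₁₂, a₁, 0, 0), (a₂ − a₁₂, 0, a₂, 0), (1 − a₁ − a₂ + a₁₂, 1 − a₁, 1 − a₂, 1). Then for every vector z ∈ ℝ⁴, E[ zᵀ · A · s(c₁(ω), c₂(ω)) ] = zᵀ · s(r₁, r₂). -/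
open Matrix MeasureTheory

theorem stmt_15 {Ω : Type*} [MeasurableSpace Ω] (P : Measure Ω) [IsProbabilityMeasure P]
    (r₁ r₂ : ℝ) (hr₁ : r₁ = 0 ∨ r₁ = 1) (hr₂ : r₂ = 0 ∨ r₂ = 1)
    (e₁ e₂ : Ω → ℝ) (he₁ : Measurable e₁) (he₂ : Measurable e₂)
    (he₁bin : ∀ ω, e₁ ω = 0 ∨ e₁ ω = 1) (he₂bin : ∀ ω, e₂ ω = 0 ∨ e₂ ω = 1)
    (c₁ c₂ : Ω → ℝ) (hc₁ : ∀ ω, c₁ ω = e₁ ω * r₁) (hc₂ : ∀ ω, c₂ ω = e₂ ω * r₂)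
    (p₁ p₂ p₁₂ : ℝ)
    (hp₁ : p₁ = (P {ω | e₁ ω = 1}).toReal)
    (hp₂ : p₂ = (P {ω | e₂ ω = 1}).toReal)
    (hp₁₂ : p₁₂ = (P {ω | e₁ ω = 1 ∧ e₂ ω = 1}).toReal)
    (hp₁pos : 0 < p₁) (hp₂pos : 0 < p₂) (hp₁₂pos : 0 < p₁₂)
    (a₁ a₂ a₁₂ : ℝ) (ha₁ : a₁ = 1 / p₁) (ha₂ : a₂ = 1 / p₂) (ha₁₂ : a₁₂ = 1 / p₁₂)
    (A : Matrix (Fin 4) (Fin 4) ℝ)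
    (hA : A = !![a₁₂, 0, 0, 0;
                 a₁ - a₁₂, a₁, 0, 0;
                 a₂ - a₁₂, 0, a₂, 0;
                 1 - a₁ - a₂ + a₁₂, 1 - a₁, 1 - a₂, 1]) :
    ∀ z : Fin 4 → ℝ,
      (∫ ω, z ⬝ᵥ A.mulVec (svec (c₁ ω) (c₂ ω)) ∂P) = z ⬝ᵥ svec r₁ r₂ := by
  intro z
  have hi : ∀ S : Set Ω, MeasurableSet S → ∀ f : Ω → ℝ, (∀ ω, f ω = S.indicator 1 ω) →
      Integrable f P ∧ ∫ ω, f ω ∂P = (P S).toReal := by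
    intro S hS f hf
    have hf' : f = S.indicator 1 := funext hf
    subst hf'
    refine ⟨(integrable_const (1 : ℝ)).indicator hS, ?_⟩
    rw [integral_indicator_one hS]
    rfl
  have m₁ : MeasurableSet {ω | e₁ ω = 1} := he₁ (measurableSet_singleton 1)
  have m₂ : MeasurableSet {ω | e₂ ω = 1} := he₂ (measurableSet_singleton 1)
  obtain ⟨i₁, v₁⟩ := hi _ m₁ e₁ (by
    intro ω
    rcases he₁bin ω with h | h <;> simp [Set.indicator, h])
  obtain ⟨i₂, v₂⟩ := hi _ m₂ e₂ (by
    intro ω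
    rcases he₂bin ω with h | h <;> simp [Set.indicator, h])
  obtain ⟨i₁₂, v₁₂⟩ := hi {ω | e₁ ω = 1 ∧ e₂ ω = 1} (m₁.inter m₂) (fun ω => e₁ ω * e₂ ω) (by
    intro ω
    rcases he₁bin ω with h | h <;> rcases he₂bin ω with h' | h' <;>
      simp [Set.indicator, h, h'])
  rw [← hp₁] at v₁
  rw [← hp₂] at v₂
  rw [← hp₁₂] at v₁₂
  have key : ∀ ω, z ⬝ᵥ A.mulVec (svec (c₁ ω) (c₂ ω)) =
      z 3 + (((z 1 - z 3) * a₁ * r₁) * e₁ ω + (((z 2 - z 3) * a₂ * r₂) * e₂ ω +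
        ((z 0 - z 1 - z 2 + z 3) * a₁₂ * r₁ * r₂) * (e₁ ω * e₂ ω))) := by
    intro ω
    rw [hA, hc₁, hc₂]
    simp [svec, dotProduct, Matrix.mulVec, Fin.sum_univ_four]
    ring
  simp_rw [key]
  have j₁ := i₁.const_mul ((z 1 - z 3) * a₁ * r₁)
  have j₂ := i₂.const_mul ((z 2 - z 3) * a₂ * r₂)
  have j₁₂ := i₁₂.const_mul ((z 0 - z 1 - z 2 + z 3) * a₁₂ * r₁ * r₂)
  rw [integral_add (integrable_const _) (by exact j₁.add (j₂.add j₁₂)),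
    integral_add j₁ (by exact j₂.add j₁₂), integral_add j₂ j₁₂,
    integral_const_mul, integral_const_mul, integral_const_mul, v₁, v₂, v₁₂, ha₁, ha₂, ha₁₂]
  simp [svec, dotProduct, Fin.sum_univ_four]
  field_simp
  ring
end
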